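/- Let R = ⊕_{i≥0} R_i be a standard positively graded Noetherian ring with (R_0, m_0) Artinian local with infinite residue field, and let I be a homogeneous ideal of height g satisfying the condition G_s. If J = a : I is an s-residual intersection of I with a homogeneous, then a has an A-N homogeneous generating set, i.e., there exists a homogeneous generating set a_1,...,a_s of a such that (a_1,...,a_i) : I is an i-residual intersection of I for all g ≤ i ≤ s. -/

import Mathlib

open CategoryTheory

noncomputable section

variable (R₀ : Type) [CommRing R₀]
variable (R : Type) [CommRing R] [Algebra R₀ R]
variable (𝒜 : ℕ → Submodule R₀ R) [GradedAlgebra 𝒜]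

/-- The graded maximal ideal `𝔪 = 𝔪₀ ⊕ R₊` of a positively graded *local ring. -/
def gradedMaxIdeal [IsLocalRing R₀] : Ideal R :=
  Ideal.span ((algebraMap R₀ R) '' (IsLocalRing.maximalIdeal R₀)) ⊔
    (HomogeneousIdeal.irrelevant 𝒜).toIdeal

/-- The irrelevant ideal `R₊` of a positively graded ring. -/
def irrelevantIdeal : Ideal R := (HomogeneousIdeal.irrelevant 𝒜).toIdeal

/-- The graded ring `R` is standard graded over `R₀`: the degree-zero part is generated
by `1` and the ring is generated in degree one. -/
def IsStandardGraded : Prop :=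
  (𝒜 0 = Submodule.span R₀ {1}) ∧ ∀ n : ℕ, 𝒜 (n + 1) = 𝒜 1 * 𝒜 n

/-- A ℤ-grading (by additive subgroups) on an `R`-module `H`, compatible with the grading
`𝒜` of `R`: an internal direct sum decomposition `H = ⊕ ℋ_j` with `𝒜_i • ℋ_j ⊆ ℋ_{i+j}`. -/
def IsCompatibleGrading (H : Type) [AddCommGroup H] [Module R H]
    (ℋ : ℤ → AddSubgroup H) : Prop :=
  DirectSum.IsInternal ℋ ∧
    ∀ (i : ℕ) (j : ℤ) (a : R) (x : H), a ∈ 𝒜 i → x ∈ ℋ j → a • x ∈ ℋ ((i : ℤ) + j)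

/-- Local cohomology `H^i_q(M)` with support in the ideal `q`. -/
def localCoh (q : Ideal R) (i : ℕ) (M : Type) [AddCommGroup M] [Module R M] :
    ModuleCat R :=
  (localCohomology q i).obj (ModuleCat.of R M)

/-- The depth of `M` with respect to the ideal `q`. -/
def depthWrt (q : Ideal R) (M : Type) [AddCommGroup M] [Module R M] : ℕ∞ :=
  sSup {n : ℕ∞ | ∃ rs : List R, (rs.length : ℕ∞) = n ∧
    (∀ r ∈ rs, r ∈ q) ∧ RingTheory.Sequence.IsRegular M rs}

/-- The (classical) grade of an ideal. -/
def idealGrade (I : Ideal R) : ℕ∞ :=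
  sSup {n : ℕ∞ | ∃ rs : List R, (rs.length : ℕ∞) = n ∧
    (∀ r ∈ rs, r ∈ I) ∧ RingTheory.Sequence.IsRegular R rs}

/-- The height of an ideal. -/
def idealHeight (I : Ideal R) : ℕ∞ :=
  ⨅ (p : PrimeSpectrum R) (_ : I ≤ p.asIdeal), Order.height p

/-- The minimal number of generators of an ideal. -/
def idealMu (I : Ideal R) : ℕ∞ :=
  sInf {n : ℕ∞ | ∃ s : Finset R, (s.card : ℕ∞) = n ∧ Ideal.span (s : Set R) = I}

/-- The minimal number of generators of a module. -/
def moduleMu (M : Type) [AddCommGroup M] [Module R M] : ℕ∞ :=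
  sInf {n : ℕ∞ | ∃ s : Finset M, (s.card : ℕ∞) = n ∧ Submodule.span R (s : Set M) = ⊤}

/-- A Cohen-Macaulay local ring. -/
def IsCMLocalRing (A : Type) [CommRing A] [IsLocalRing A] : Prop :=
  (depthWrt A (IsLocalRing.maximalIdeal A) A : WithBot ℕ∞) = ringKrullDim A

/-- A Cohen-Macaulay ring: all localizations at maximal ideals are CM local rings. -/
def IsCMRing (A : Type) [CommRing A] : Prop :=
  ∀ (p : Ideal A), (hp : p.IsMaximal) →
    haveI := hp.isPrime
    IsCMLocalRing (Localization.AtPrime p)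

/-- The dimension of a module. -/
def moduleDim (M : Type) [AddCommGroup M] [Module R M] : WithBot ℕ∞ :=
  ringKrullDim (R ⧸ Module.annihilator R M)

/-- A module is Cohen-Macaulay w.r.t. an ideal `q` if it is zero or its depth w.r.t. `q`
equals its dimension. -/
def IsCMModuleWrt (q : Ideal R) (M : Type) [AddCommGroup M] [Module R M] : Prop :=
  Subsingleton M ∨ (depthWrt R q M : WithBot ℕ∞) = moduleDim R M

/-- `J = 𝔞 : I` is an `s`-residual intersection of `I`. -/
def IsResidualIntersection (a I J : Ideal R) (s : ℕ) : Prop :=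
  a ≤ I ∧ J = a.colon I ∧ idealMu R a ≤ s ∧ (s : ℕ∞) ≤ idealHeight R J

/-- A geometric `s`-residual intersection: moreover `ht (I + J) ≥ s + 1`. -/
def IsGeometricResidualIntersection (a I J : Ideal R) (s : ℕ) : Prop :=
  IsResidualIntersection R a I J s ∧ (s + 1 : ℕ∞) ≤ idealHeight R (I ⊔ J)

/-!
The ideal `a` is written as `(f₀, f₁, …)` with homogeneous `f_j` of decreasing degrees, and `f_i`
is successively replaced by `f_i + w` with a generic `w ∈ (f_{i+1}, …)` of the same degree. The
invariant, with `b_i` the ideal of the first `i` new generators, is that `(I / b_i)_p` needs at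
most `ht p + 1 - i` generators at each prime `p` of height less than `s`; for `ht p < i` it says
`I_p = (b_i)_p`, hence `ht (b_i : I) ≥ i`. One more element of `I` preserves the invariant unless
it vanishes in the fibre of `I / b_i` at one of finitely many primes. If such a prime `p` does not
contain `R₊`, then some form of the right degree outside `p` times a later `f_j` moves `f_i` off
the bad set; a single `w` serves for all these primes because the residue field of `R₀` is
infinite.

At most one prime contains `R₊`. If its height is `h < s`, then `h + 1` of the generators suffice
for `I` locally at it, hence for `a` by homogeneity; so the step `f_i` is only taken for `i ≤ h`,
and `(I / b_i)_p = 0` is only to be checked at primes of height less than `i`, which excludes it.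
-/

section LocalGeneration

variable {A M : Type*} [CommRing A] [AddCommGroup M] [Module A M]

/-- For finitely generated `I`, the containment `I_p ⊆ K_p` of localizations at the prime `p`:
some element outside `p` multiplies `I` into `K`. -/
def LocallyLE (p : Ideal A) (I K : Submodule A M) : Prop :=
  ¬ K.colon (I : Set M) ≤ p

/-- The bound `μ((I + b)_p / b_p) ≤ k`, with the local generators chosen in `I`. -/
def LocallyGenerated (p : Ideal A) (I b : Submodule A M) (k : ℕ) : Prop :=
  ∃ x : Finset M, x.card ≤ k ∧ (x : Set M) ⊆ I ∧ LocallyLE p I (Submodule.span A x ⊔ b)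

/-- The ideal whose zero locus is the set of primes at which `I` is not generated by `k` elements
modulo `b`; for finitely generated `I` it has the radical of a Fitting ideal of `(I + b) / b`. -/
def nonGenerationIdeal (I b : Submodule A M) (k : ℕ) : Ideal A :=
  ⨆ x : {x : Finset M // x.card ≤ k ∧ (x : Set M) ⊆ I},
    (Submodule.span A (x : Set M) ⊔ b).colon (I : Set M)

variable {p : Ideal A} {I I' K K' L b b' : Submodule A M} {k l : ℕ}

lemma locallyLE_iff : LocallyLE p I K ↔ ∃ c ∉ p, ∀ y ∈ I, c • y ∈ K := by
  simp only [LocallyLE, SetLike.not_le_iff_exists, Submodule.mem_colon, SetLike.mem_coe,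
    and_comm]

lemma locallyLE_span_singleton_iff {v : M} :
    LocallyLE p (Submodule.span A {v}) K ↔ ∃ c ∉ p, c • v ∈ K := by
  simp only [LocallyLE, SetLike.not_le_iff_exists, Submodule.mem_colon_span_singleton, and_comm]

lemma LocallyLE.mono (h : LocallyLE p I K) (hI : I' ≤ I) (hK : K ≤ K') : LocallyLE p I' K' :=
  fun hle => h ((Submodule.colon_mono hK hI).trans hle)

lemma LocallyLE.of_le [hp : p.IsPrime] (h : I ≤ K) : LocallyLE p I K :=
  locallyLE_iff.2 ⟨1, p.one_notMem, fun y hy => by simpa only [one_smul] using h hy⟩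

lemma LocallyLE.trans [hp : p.IsPrime] (h : LocallyLE p I K) (h' : LocallyLE p K L) :
    LocallyLE p I L := by
  obtain ⟨c, hc, hcK⟩ := locallyLE_iff.1 h
  obtain ⟨d, hd, hdL⟩ := locallyLE_iff.1 h'
  refine locallyLE_iff.2 ⟨d * c, hp.mul_notMem hd hc, fun y hy => ?_⟩
  rw [mul_smul]
  exact hdL _ (hcK y hy)

lemma LocallyLE.sup [hp : p.IsPrime] (h : LocallyLE p I K) (h' : LocallyLE p I' K) :
    LocallyLE p (I ⊔ I') K := by
  have hcolon : K.colon ((I ⊔ I' : Submodule A M) : Set M) = K.colon I ⊓ K.colon I' := by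
    rw [← Submodule.colon_union, ← Submodule.colon_span (S := (I ∪ I' : Set M)),
      Submodule.span_union, Submodule.span_eq, Submodule.span_eq]
  rw [LocallyLE, hcolon, hp.inf_le]
  exact not_or_intro h h'

lemma LocallyLE.of_fg [hp : p.IsPrime] (hI : I.FG)
    (h : ∀ y ∈ I, LocallyLE p (Submodule.span A {y}) K) : LocallyLE p I K := by
  induction I, hI using Submodule.fg_induction with
  | singleton x => exact h x (Submodule.mem_span_singleton_self x)
  | sup N₁ N₂ _ _ ih₁ ih₂ =>
    exact (ih₁ fun y hy => h y (Submodule.mem_sup_left hy)).sup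
      (ih₂ fun y hy => h y (Submodule.mem_sup_right hy))

/-- Nakayama's lemma at `p`. -/
lemma LocallyLE.of_le_smul_sup [hp : p.IsPrime] (hI : I.FG) (h : LocallyLE p I (p • I ⊔ b)) :
    LocallyLE p I b := by
  induction I, hI using Submodule.fg_induction generalizing b with
  | singleton x =>
    obtain ⟨c, hc, hcx⟩ := locallyLE_span_singleton_iff.1 h
    obtain ⟨_, hrx, β, hβ, hsum⟩ := Submodule.mem_sup.1 hcx
    obtain ⟨r, hr, rfl⟩ := Submodule.mem_smul_span_singleton.1 hrx
    refine locallyLE_span_singleton_iff.2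
      ⟨c - r, fun hcr => hc ((Submodule.sub_mem_iff_left p hr).1 hcr), ?_⟩
    rwa [sub_smul, ← hsum, add_sub_cancel_left]
  | sup N₁ N₂ _ _ ih₁ ih₂ =>
    rw [Submodule.smul_sup, sup_assoc] at h
    have h₁ : LocallyLE p N₁ (p • N₂ ⊔ b) := ih₁ (h.mono le_sup_left le_rfl)
    have h₂ : LocallyLE p N₂ b := ih₂ <| (h.mono le_sup_right le_rfl).trans <|
      (h₁.mono Submodule.smul_le_right le_rfl).sup (.of_le le_rfl)
    have hle : p • N₂ ⊔ b ≤ N₂ ⊔ b := sup_le_sup_right Submodule.smul_le_right b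
    exact ((h₁.mono le_rfl hle).trans (h₂.sup (.of_le le_rfl))).sup h₂

lemma locallyGenerated_iff_not_nonGenerationIdeal_le :
    LocallyGenerated p I b k ↔ ¬ nonGenerationIdeal I b k ≤ p := by
  simp only [LocallyGenerated, LocallyLE, nonGenerationIdeal, iSup_le_iff, Subtype.forall,
    not_forall, exists_prop, and_assoc]

lemma locallyGenerated_zero_iff : LocallyGenerated p I b 0 ↔ LocallyLE p I b := by
  simp [LocallyGenerated]

lemma LocallyGenerated.mono (h : LocallyGenerated p I b k) (hkl : k ≤ l) (hb : b ≤ b') :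
    LocallyGenerated p I b' l := by
  obtain ⟨x, hxk, hxI, hx⟩ := h
  exact ⟨x, hxk.trans hkl, hxI, hx.mono le_rfl (sup_le_sup_left hb _)⟩

lemma LocallyLE.locallyGenerated (h : LocallyLE p I b) : LocallyGenerated p I b k :=
  (locallyGenerated_zero_iff.2 h).mono k.zero_le le_rfl

/-- The elements of `M` that lie in `p I + b` locally at `p`; those in `I` are the ones vanishing
in the fibre `((I + b) / b) ⊗ κ(p)`. -/
def fiberKernel (p : Ideal A) [hp : p.IsPrime] (I b : Submodule A M) : Submodule A M where
  carrier := {v | LocallyLE p (Submodule.span A {v}) (p • I ⊔ b)}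
  zero_mem' := LocallyLE.of_le (by simp)
  add_mem' {v w} hv hw := (hv.sup hw).mono
    ((Submodule.span_singleton_le_iff_mem _ _).2 (Submodule.add_mem_sup
      (Submodule.mem_span_singleton_self v) (Submodule.mem_span_singleton_self w))) le_rfl
  smul_mem' r v hv := hv.mono (Submodule.span_singleton_smul_le A r v) le_rfl

variable [hp : p.IsPrime]

lemma mem_fiberKernel_of_smul_mem {r : A} {v : M} (hr : r ∉ p) (h : r • v ∈ fiberKernel p I b) :
    v ∈ fiberKernel p I b := by
  obtain ⟨c, hc, hcv⟩ := locallyLE_span_singleton_iff.1 h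
  exact locallyLE_span_singleton_iff.2 ⟨c * r, hp.mul_notMem hc hr, by rwa [mul_smul]⟩

lemma le_fiberKernel : b ≤ fiberKernel p I b := fun _ hv =>
  LocallyLE.of_le <| (Submodule.span_singleton_le_iff_mem _ _).2 (Submodule.mem_sup_right hv)

lemma exists_notMem_fiberKernel (hI : I.FG) {F : Set M}
    (hF : LocallyLE p I (b ⊔ Submodule.span A F)) (hb : ¬ LocallyLE p I b) :
    ∃ v ∈ F, v ∉ fiberKernel p I b := by
  by_contra! hcon
  obtain ⟨c, hc, hcI⟩ :=
    locallyLE_iff.1 (hF.mono le_rfl (sup_le le_fiberKernel (Submodule.span_le.2 hcon)))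
  exact hb <| .of_le_smul_sup hI <| .of_fg hI fun y hy =>
    mem_fiberKernel_of_smul_mem hc (hcI y hy)

/-- If all coefficients of `v` in the local generators lay in `p`, then `v` would vanish in the
fibre; a generator whose coefficient is outside `p` can be traded for `v`. -/
lemma LocallyGenerated.sup_span_singleton (h : LocallyGenerated p I b (k + 1)) {v : M}
    (hvI : v ∈ I) (hv : v ∉ fiberKernel p I b) :
    LocallyGenerated p I (b ⊔ Submodule.span A {v}) k := by
  classical
  obtain ⟨x, hxk, hxI, hx⟩ := h
  obtain ⟨c, hc, hcI⟩ := locallyLE_iff.1 hx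
  obtain ⟨y, hy, β, hβ, hyβ⟩ := Submodule.mem_sup.1 (hcI v hvI)
  obtain ⟨r, -, rfl⟩ := Submodule.mem_span_finset.1 hy
  obtain ⟨j, hj, hrj⟩ : ∃ j ∈ x, r j ∉ p := by
    by_contra! hcon
    refine hv (locallyLE_span_singleton_iff.2 ⟨c, hc, hyβ ▸ ?_⟩)
    exact Submodule.add_mem_sup
      (sum_mem fun j hj => Submodule.smul_mem_smul (hcon j hj) (hxI hj)) hβ
  let K := Submodule.span A (x.erase j : Set M) ⊔ (b ⊔ Submodule.span A {v})
  have hbK : b ≤ K := le_sup_left.trans le_sup_right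
  have hvK : v ∈ K :=
    Submodule.mem_sup_right (Submodule.mem_sup_right (Submodule.mem_span_singleton_self v))
  have heraseK : ∑ l ∈ x.erase j, r l • l ∈ K :=
    Submodule.mem_sup_left (sum_mem fun l hl => Submodule.smul_mem _ _ (Submodule.subset_span hl))
  have hrjK : r j • j ∈ K := by
    have hrj_eq : r j • j = c • v - β - ∑ l ∈ x.erase j, r l • l := by
      rw [← hyβ, ← Finset.add_sum_erase x _ hj]
      abel
    exact hrj_eq ▸ sub_mem (sub_mem (Submodule.smul_mem _ _ hvK) (hbK hβ)) heraseK
  have hspan : Submodule.span A (x : Set M) ⊔ b =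
      Submodule.span A {j} ⊔ (Submodule.span A (x.erase j : Set M) ⊔ b) := by
    rw [← sup_assoc, ← Submodule.span_insert, ← Finset.coe_insert, Finset.insert_erase hj]
  refine ⟨x.erase j, ?_, (Finset.coe_subset.2 (x.erase_subset j)).trans hxI, hx.trans ?_⟩
  · rw [Finset.card_erase_of_mem hj]
    omega
  · rw [hspan]
    exact (locallyLE_span_singleton_iff.2 ⟨r j, hrj, hrjK⟩).sup
      (.of_le (sup_le_sup_left le_sup_left _))

lemma LocallyGenerated.exists_finset_subset (hI : I.FG) (h : LocallyGenerated p I b k) {F : Set M}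
    (hFI : F ⊆ I) (hF : LocallyLE p I (b ⊔ Submodule.span A F)) :
    ∃ F' : Finset M, (F' : Set M) ⊆ F ∧ F'.card ≤ k ∧
      LocallyLE p I (b ⊔ Submodule.span A (F' : Set M)) := by
  classical
  induction k generalizing b with
  | zero => exact ⟨∅, by simp, by simp, by simpa using locallyGenerated_zero_iff.1 h⟩
  | succ k ih =>
    by_cases hb : LocallyLE p I b
    · exact ⟨∅, by simp, by simp, by simpa using hb⟩
    obtain ⟨v, hvF, hv⟩ := exists_notMem_fiberKernel hI hF hb
    obtain ⟨F', hF'F, hF'k, hF'⟩ := ih (h.sup_span_singleton (hFI hvF) hv)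
      (hF.mono le_rfl (sup_le_sup_right le_sup_left _))
    refine ⟨insert v F', ?_, (F'.card_insert_le v).trans (by omega), ?_⟩
    · rw [Finset.coe_insert]
      exact Set.insert_subset hvF hF'F
    · rwa [Finset.coe_insert, Submodule.span_insert, ← sup_assoc]

end LocalGeneration

section CosetAvoidance

open IsLocalRing
open scoped Pointwise

variable {K M : Type*} [CommRing K] [IsLocalRing K] [Infinite (ResidueField K)]
  [AddCommGroup M] [Module K M]

lemma submodule_eq_top_of_finiteIndex (N : Submodule K M) [N.toAddSubgroup.FiniteIndex] :
    N = ⊤ := by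
  refine Submodule.eq_top_iff'.2 fun x => ?_
  let lift : ResidueField K → K := Function.surjInv residue_surjective
  obtain ⟨τ, σ, hne, heq⟩ := Finite.exists_ne_map_eq_of_infinite
    fun τ : ResidueField K => (QuotientAddGroup.mk (lift τ • x) : M ⧸ N.toAddSubgroup)
  have hunit : IsUnit (-lift τ + lift σ) := by
    rw [← residue_ne_zero_iff_isUnit, map_add, map_neg,
      Function.surjInv_eq residue_surjective, Function.surjInv_eq residue_surjective]
    exact fun h => hne (neg_add_eq_zero.1 h)
  refine (N.smul_mem_iff_of_isUnit hunit).1 ?_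
  rw [add_smul, neg_smul]
  exact QuotientAddGroup.eq.1 heq

/-- By B. H. Neumann's lemma, if cosets of the submodules `N q ⊓ W` covered `W`, then one of these
submodules would have finite index in `W`, hence be all of `W`. -/
lemma exists_mem_forall_add_notMem {ι : Type*} (N : ι → Submodule K M) (f : M)
    (W : Submodule K M) (S : Finset ι) (h : ∀ q ∈ S, ∃ w ∈ W, f + w ∉ N q) :
    ∃ w ∈ W, ∀ q ∈ S, f + w ∉ N q := by
  classical
  by_contra! hcon
  let H : ι → Submodule K W := fun q => (N q).comap W.subtype
  let S' := S.filter fun q => ∃ w : W, f + w ∈ N q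
  have hS' : ∀ q ∈ S', ∃ w : W, f + w ∈ N q := fun q hq => (Finset.mem_filter.1 hq).2
  choose! w₀ hw₀ using hS'
  have hmem_iff : ∀ q ∈ S', ∀ w : W, f + w ∈ N q ↔ -w₀ q + w ∈ H q := fun q hq w => by
    have hdiff : (-w₀ q + w : W) = (f + w : M) - (f + w₀ q) := by
      push_cast
      abel
    rw [Submodule.mem_comap, Submodule.subtype_apply, hdiff,
      Submodule.sub_mem_iff_left _ (hw₀ q hq)]
  have hcover : ⋃ q ∈ S', w₀ q +ᵥ ((H q).toAddSubgroup : Set W) = Set.univ := by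
    refine Set.eq_univ_of_forall fun w => ?_
    obtain ⟨q, hqS, hq⟩ := hcon w w.2
    have hqS' : q ∈ S' := Finset.mem_filter.2 ⟨hqS, w, hq⟩
    exact Set.mem_biUnion hqS' (Set.mem_vadd_set_iff_neg_vadd_mem.2 ((hmem_iff q hqS' w).1 hq))
  obtain ⟨q, hqS', hfin⟩ := AddSubgroup.exists_finiteIndex_of_leftCoset_cover hcover
  obtain ⟨w, hw, hwq⟩ := h q (Finset.mem_filter.1 hqS').1
  exact hwq ((hmem_iff q hqS' ⟨w, hw⟩).2
    (submodule_eq_top_of_finiteIndex (H q) ▸ Submodule.mem_top))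

end CosetAvoidance

section Enumeration

lemma exists_antitone_enumeration {α β : Type*} [LinearOrder β] (deg : α → β) {z : α}
    (hz : ∀ x, deg z ≤ deg x) (F : Finset α) :
    ∃ f : ℕ → α, Antitone (deg ∘ f) ∧ (∀ j, F.card ≤ j → f j = z) ∧
      Set.range f = insert z (F : Set α) := by
  classical
  induction F using Finset.induction_on_max_value deg with
  | empty => exact ⟨fun _ => z, antitone_const, fun _ _ => rfl, by simp⟩
  | insert x F hxF hmax ih =>
    obtain ⟨f, hanti, hzero, hrange⟩ := ih
    have hle : ∀ j, deg (f j) ≤ deg x := fun j => by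
      rcases hrange ▸ Set.mem_range_self j with hj | hj
      · exact hj ▸ hz x
      · exact hmax _ hj
    refine ⟨fun j => Nat.casesOn j x f, antitone_nat_of_succ_le fun j => ?_, fun j hj => ?_, ?_⟩
    · cases j with
      | zero => exact hle 0
      | succ j => exact hanti j.le_succ
    · rw [Finset.card_insert_of_notMem hxF] at hj
      obtain ⟨j, rfl⟩ := Nat.exists_eq_add_of_le' (Nat.one_le_of_lt hj)
      exact hzero j (Nat.le_of_succ_le_succ hj)
    · rw [Finset.coe_insert, Set.insert_comm, ← hrange]
      exact Nat.range_casesOn x f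

lemma exists_antitone_homogeneous_enumeration {A σ : Type*} [CommRing A] [SetLike σ A]
    [AddSubmonoidClass σ A] {ℬ : ℕ → σ} {F : Finset A}
    (hF : ∀ x ∈ F, SetLike.IsHomogeneousElem ℬ x) :
    ∃ (f : ℕ → A) (d : ℕ → ℕ), Antitone d ∧ (∀ j, f j ∈ ℬ (d j)) ∧
      (∀ j, F.card ≤ j → f j = 0) ∧ Ideal.span (Set.range f) = Ideal.span (F : Set A) := by
  let deg : A → ℕ := fun x => sInf {e | x ∈ ℬ e}
  have hdeg_zero : deg 0 = 0 := Nat.sInf_eq_zero.2 (Or.inl (zero_mem (ℬ 0)))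
  obtain ⟨f, hanti, hzero, hrange⟩ :=
    exists_antitone_enumeration deg (z := 0) (fun x => hdeg_zero ▸ Nat.zero_le _) F
  refine ⟨f, deg ∘ f, hanti, fun j => Nat.sInf_mem (s := {e | f j ∈ ℬ e}) ?_, hzero, ?_⟩
  · rcases hrange ▸ Set.mem_range_self j with hj | hj
    · exact ⟨0, hj ▸ zero_mem (ℬ 0)⟩
    · exact hF _ hj
  · rw [hrange, Ideal.span_insert_zero]

end Enumeration

section GradedAlgebra

variable {R₀ R 𝒜}

lemma exists_mem_notMem_of_not_irrelevantIdeal_le (hstd : IsStandardGraded R₀ R 𝒜) {p : Ideal R}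
    [hp : p.IsPrime] (h : ¬ irrelevantIdeal R₀ R 𝒜 ≤ p) (k : ℕ) : ∃ r ∈ 𝒜 k, r ∉ p := by
  obtain ⟨r, hr, hrp⟩ : ∃ r ∈ 𝒜 1, r ∉ p := by
    by_contra! hcon
    refine h ((HomogeneousIdeal.toIdeal_irrelevant_le 𝒜).2 fun k hk x hx => ?_)
    obtain ⟨n, rfl⟩ := Nat.exists_eq_succ_of_ne_zero hk.ne'
    rw [hstd.2 n] at hx
    exact Submodule.mul_le (P := p.restrictScalars R₀).2
      (fun y hy z _ => p.mul_mem_right z (hcon y hy)) hx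
  refine ⟨r ^ k, ?_, fun hrk => hrp (hp.mem_of_pow_mem k hrk)⟩
  simpa only [smul_eq_mul, mul_one] using SetLike.pow_mem_graded k hr

lemma sub_decompose_zero_mem_irrelevantIdeal (x : R) :
    x - (DirectSum.decompose 𝒜 x 0 : R) ∈ irrelevantIdeal R₀ R 𝒜 := by
  rw [irrelevantIdeal, HomogeneousIdeal.mem_iff, HomogeneousIdeal.mem_irrelevant_iff, map_sub,
    GradedRing.proj_apply, GradedRing.proj_apply, DirectSum.decompose_coe, DirectSum.of_eq_same,
    sub_self]

lemma irrelevantIdeal_ne_top [Nontrivial R] : irrelevantIdeal R₀ R 𝒜 ≠ ⊤ := by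
  rw [Ideal.ne_top_iff_one, irrelevantIdeal, HomogeneousIdeal.mem_iff,
    HomogeneousIdeal.mem_irrelevant_iff, GradedRing.proj_apply,
    DirectSum.decompose_of_mem_same 𝒜 SetLike.GradedOne.one_mem]
  exact one_ne_zero

section Artinian

variable [IsArtinianRing R₀] [IsLocalRing R₀]

/-- The degree zero component is the image of an element of `R₀` which is not in the contraction
of `p`, and the maximal ideal is the only prime of `R₀`. -/
lemma isUnit_decompose_zero (h₀ : 𝒜 0 = Submodule.span R₀ {1}) {p : Ideal R} [hp : p.IsPrime]
    (hirr : irrelevantIdeal R₀ R 𝒜 ≤ p) {x : R} (hx : x ∉ p) :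
    IsUnit (DirectSum.decompose 𝒜 x 0 : R) := by
  have hx₀ : (DirectSum.decompose 𝒜 x 0 : R) ∉ p := fun h =>
    hx ((Submodule.sub_mem_iff_left p h).1 (hirr (sub_decompose_zero_mem_irrelevantIdeal x)))
  obtain ⟨r, hr⟩ : ∃ r : R₀, r • (1 : R) = DirectSum.decompose 𝒜 x 0 :=
    Submodule.mem_span_singleton.1 (h₀ ▸ SetLike.coe_mem _)
  rw [← hr, ← Algebra.algebraMap_eq_smul_one] at hx₀ ⊢
  have hcomap : p.comap (algebraMap R₀ R) = IsLocalRing.maximalIdeal R₀ :=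
    IsLocalRing.eq_maximalIdeal (IsArtinianRing.isMaximal_of_isPrime _)
  have hrm : r ∉ IsLocalRing.maximalIdeal R₀ := hcomap ▸ hx₀
  exact (IsLocalRing.notMem_maximalIdeal.1 hrm).map _

lemma eq_of_irrelevantIdeal_le (h₀ : 𝒜 0 = Submodule.span R₀ {1}) {p q : PrimeSpectrum R}
    (hp : irrelevantIdeal R₀ R 𝒜 ≤ p.asIdeal) (hq : irrelevantIdeal R₀ R 𝒜 ≤ q.asIdeal) :
    p = q := by
  have hle : ∀ {p q : PrimeSpectrum R}, irrelevantIdeal R₀ R 𝒜 ≤ p.asIdeal →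
      irrelevantIdeal R₀ R 𝒜 ≤ q.asIdeal → p ≤ q := fun {p q} hp hq x hxp => by
    by_contra hxq
    refine p.isPrime.ne_top (p.asIdeal.eq_top_of_isUnit_mem ?_ (isUnit_decompose_zero h₀ hq hxq))
    exact (Submodule.sub_mem_iff_right _ hxp).1 (hp (sub_decompose_zero_mem_irrelevantIdeal x))
  exact le_antisymm (hle hp hq) (hle hq hp)

/-- The degree zero component of an element `c ∉ p` with `c a ⊆ b` is a unit with the same
property. -/
lemma le_of_locallyLE_of_irrelevantIdeal_le (h₀ : 𝒜 0 = Submodule.span R₀ {1}) {p : Ideal R}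
    [p.IsPrime] (hirr : irrelevantIdeal R₀ R 𝒜 ≤ p) {a b : Ideal R} (ha : a.IsHomogeneous 𝒜)
    (hb : b.IsHomogeneous 𝒜) (h : LocallyLE p a b) : a ≤ b := by
  obtain ⟨c, hc, hcb⟩ := locallyLE_iff.1 h
  obtain ⟨S, rfl⟩ := (Ideal.IsHomogeneous.iff_exists 𝒜 a).1 ha
  refine Ideal.span_le.2 ?_
  rintro _ ⟨⟨y, e, hy⟩, hyS, rfl⟩
  have hcy := hb (0 + e) (hcb y (Ideal.subset_span ⟨_, hyS, rfl⟩))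
  rw [smul_eq_mul, DirectSum.coe_decompose_mul_add_of_right_mem 𝒜 hy] at hcy
  exact (Ideal.unit_mul_mem_iff_mem _ (isUnit_decompose_zero h₀ hirr hc)).1 hcy

lemma exists_antitone_homogeneous_generators (h₀ : 𝒜 0 = Submodule.span R₀ {1}) {p : Ideal R}
    [p.IsPrime] (hirr : irrelevantIdeal R₀ R 𝒜 ≤ p) {I a : Ideal R} (hI : I.FG) (haI : a ≤ I)
    (ha : a.IsHomogeneous 𝒜) (hloc : LocallyLE p I a) {k : ℕ} (hk : LocallyGenerated p I ⊥ k) :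
    ∃ (f : ℕ → R) (d : ℕ → ℕ), Antitone d ∧ (∀ j, f j ∈ 𝒜 (d j)) ∧ (∀ j, k ≤ j → f j = 0) ∧
      Ideal.span (Set.range f) = a := by
  obtain ⟨S, hS⟩ := (Ideal.IsHomogeneous.iff_exists 𝒜 a).1 ha
  have hSa : Submodule.span R ((↑) '' S : Set R) = a := hS.symm
  obtain ⟨F, hFS, hFk, hF⟩ := hk.exists_finset_subset hI
    ((Submodule.span_le.1 hSa.le).trans haI) (by rwa [bot_sup_eq, hSa])
  rw [bot_sup_eq] at hF
  have hFhom : ∀ x ∈ F, SetLike.IsHomogeneousElem 𝒜 x := fun x hx => by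
    obtain ⟨y, -, rfl⟩ := hFS hx
    exact y.2
  have hFa : Ideal.span (F : Set R) = a := le_antisymm (hSa ▸ Ideal.span_mono hFS) <|
    le_of_locallyLE_of_irrelevantIdeal_le h₀ hirr ha (Ideal.homogeneous_span 𝒜 _ hFhom)
      (hF.mono haI le_rfl)
  obtain ⟨f, d, hd, hfd, hf, hspan⟩ := exists_antitone_homogeneous_enumeration hFhom
  exact ⟨f, d, hd, hfd, fun j hj => hf j (hFk.trans hj), hspan.trans hFa⟩

end Artinian

end GradedAlgebra

section LocalGeneratorBound

variable {A : Type*} [CommRing A]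

/-- For every prime `p` in `U` of height at most `h < s`, the ideal `I` is generated modulo `b` by
`h + 1 - i` elements locally at `p`. The subtraction is truncated: if `h < i`, then `I_p ⊆ b_p`. -/
def HasLocalGeneratorBound (U : Set (PrimeSpectrum A)) (s : ℕ) (I b : Ideal A) (i : ℕ) : Prop :=
  ∀ p ∈ U, ∀ h < s, Order.height p ≤ h → LocallyGenerated p.asIdeal I b (h + 1 - i)

variable {U : Set (PrimeSpectrum A)} {s i : ℕ} {I b : Ideal A}

lemma HasLocalGeneratorBound.mem_minimalPrimes (hb : HasLocalGeneratorBound U s I b i)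
    (hU : IsLowerSet U) {p : PrimeSpectrum A} (hpU : p ∈ U) {h : ℕ} (hhs : h < s)
    (hph : Order.height p ≤ h) (hgen : ¬ LocallyGenerated p.asIdeal I b (h - i)) :
    p.asIdeal ∈ (nonGenerationIdeal I b (h - i)).minimalPrimes := by
  obtain ⟨q, hq, hqp⟩ : ∃ q : PrimeSpectrum A,
      q.asIdeal ∈ (nonGenerationIdeal I b (h - i)).minimalPrimes ∧ q ≤ p := by
    obtain ⟨q, hq, hqp⟩ := Ideal.exists_minimalPrimes_le
      (not_not.1 (locallyGenerated_iff_not_nonGenerationIdeal_le.not.1 hgen))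
    exact ⟨⟨q, hq.1.1⟩, hq, hqp⟩
  obtain rfl : q = p := by
    by_contra hne
    have hheight : Order.height q + 1 ≤ h :=
      (Order.height_add_one_le (lt_of_le_of_ne hqp hne)).trans hph
    obtain ⟨m, rfl⟩ : ∃ m, h = m + 1 := Nat.exists_eq_add_one.2 (by
      exact_mod_cast (le_add_self : (1 : ℕ∞) ≤ _).trans hheight)
    have hqm : Order.height q ≤ m := by
      rw [Nat.cast_add_one] at hheight
      exact (ENat.add_le_add_iff_right ENat.one_ne_top).1 hheight
    exact locallyGenerated_iff_not_nonGenerationIdeal_le.1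
      (hb q (hU hqp hpU) m (by omega) hqm) hq.1.2
  exact hq

/-- The bound can only fail to improve at a prime which is minimal over the locus where `I` is not
generated by `k` elements modulo `b`, for some `k < s`. -/
lemma HasLocalGeneratorBound.exists_finset [IsNoetherianRing A]
    (hb : HasLocalGeneratorBound U s I b i) (hU : IsLowerSet U) :
    ∃ Λ : Finset (PrimeSpectrum A),
      (∀ p ∈ Λ, p ∈ U ∧ Order.height p < s ∧ ¬ LocallyLE p.asIdeal I b) ∧
      ∀ v ∈ I, (∀ p ∈ Λ, v ∉ fiberKernel p.asIdeal I b) →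
        HasLocalGeneratorBound U s I (b ⊔ Ideal.span {v}) (i + 1) := by
  let Λ : Set (PrimeSpectrum A) := {p | p ∈ U ∧ Order.height p < s ∧
    ∃ k < s, p.asIdeal ∈ (nonGenerationIdeal I b k).minimalPrimes}
  have hΛ : Λ.Finite := by
    have hfin : (⋃ k ∈ Set.Iio s, (nonGenerationIdeal I b k).minimalPrimes).Finite :=
      (Set.finite_Iio s).biUnion fun k _ => Ideal.finite_minimalPrimes_of_isNoetherianRing A _
    refine (hfin.preimage fun p _ q _ h => PrimeSpectrum.ext h).subset ?_
    rintro p ⟨-, -, k, hk, hp⟩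
    exact Set.mem_biUnion hk hp
  refine ⟨hΛ.toFinset, fun p hp => ?_, fun v hvI hv p hpU h hhs hph => ?_⟩
  · obtain ⟨hpU, hps, k, -, hpk⟩ := hΛ.mem_toFinset.1 hp
    exact ⟨hpU, hps, fun hle =>
      locallyGenerated_iff_not_nonGenerationIdeal_le.1 hle.locallyGenerated hpk.1.2⟩
  · rw [Nat.add_sub_add_right]
    by_cases hgen : LocallyGenerated p.asIdeal I b (h - i)
    · exact hgen.mono le_rfl le_sup_left
    have hpΛ : p ∈ hΛ.toFinset := hΛ.mem_toFinset.2 ⟨hpU, hph.trans_lt (by exact_mod_cast hhs),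
      h - i, by omega, hb.mem_minimalPrimes hU hpU hhs hph hgen⟩
    exact ((hb p hpU h hhs hph).mono (by omega) le_rfl).sup_span_singleton hvI (hv p hpΛ)

lemma HasLocalGeneratorBound.locallyLE (hb : HasLocalGeneratorBound U s I b i) (his : i ≤ s)
    {p : PrimeSpectrum A} (hpU : p ∈ U) (hpi : Order.height p < i) : LocallyLE p.asIdeal I b := by
  obtain ⟨h, hh⟩ := ENat.ne_top_iff_exists.1 hpi.ne_top
  have hhi : h < i := by exact_mod_cast hh ▸ hpi
  refine locallyGenerated_zero_iff.1 ?_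
  exact Nat.sub_eq_zero_of_le hhi ▸ hb p hpU h (hhi.trans_le his) hh.ge

end LocalGeneratorBound

section GenericGenerators

lemma span_range_update_add {A M : Type*} [Ring A] [AddCommGroup M] [Module A M] {ι : Type*}
    [DecidableEq ι] (f : ι → M) {i : ι} {w : M} (hw : w ∈ Submodule.span A (f '' {i}ᶜ)) :
    Submodule.span A (Set.range (Function.update f i (f i + w))) =
      Submodule.span A (Set.range f) := by
  have himage : Function.update f i (f i + w) '' {i}ᶜ = f '' {i}ᶜ :=
    Set.image_congr fun j hj => Function.update_of_ne hj _ _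
  rw [← Set.insert_image_compl_eq_range f i, ← Set.insert_image_compl_eq_range _ i, himage,
    Function.update_self, Submodule.span_insert, Submodule.span_insert]
  refine le_antisymm (sup_le ?_ le_sup_right) (sup_le ?_ le_sup_right) <;>
    rw [Submodule.span_singleton_le_iff_mem]
  · exact add_mem (Submodule.mem_sup_left (Submodule.mem_span_singleton_self _))
      (Submodule.mem_sup_right hw)
  · exact (Submodule.add_mem_iff_left _ (Submodule.mem_sup_right hw)).1
      (Submodule.mem_sup_left (Submodule.mem_span_singleton_self _))

variable {R₀ R 𝒜} [IsLocalRing R₀] [Infinite (IsLocalRing.ResidueField R₀)] {f : ℕ → R} {d : ℕ → ℕ}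

/-- If `f i ∈ N p`, then `f i` is moved out of `N p` by `r * f j`, where `f j ∉ N p` and
`r ∉ p` makes up for the difference of the degrees. -/
lemma exists_homogeneous_forall_add_notMem (hstd : IsStandardGraded R₀ R 𝒜) (hd : Antitone d)
    (hf : ∀ j, f j ∈ 𝒜 (d j)) {i : ℕ} (Λ : Finset (PrimeSpectrum R))
    (hΛ : ∀ p ∈ Λ, ¬ irrelevantIdeal R₀ R 𝒜 ≤ p.asIdeal) (N : PrimeSpectrum R → Ideal R)
    (hN : ∀ p ∈ Λ, ∀ r ∉ p.asIdeal, ∀ x, r * x ∈ N p → x ∈ N p)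
    (hfN : ∀ p ∈ Λ, ∃ j ≥ i, f j ∉ N p) :
    ∃ w ∈ 𝒜 (d i), w ∈ Ideal.span (f '' Set.Ioi i) ∧ ∀ p ∈ Λ, f i + w ∉ N p := by
  let W : Submodule R₀ R := 𝒜 (d i) ⊓ (Ideal.span (f '' Set.Ioi i)).restrictScalars R₀
  obtain ⟨w, hw, hwN⟩ := exists_mem_forall_add_notMem
    (fun p => (N p).restrictScalars R₀) (f i) W Λ fun p hp => by
    by_cases hfi : f i ∈ N p
    · obtain ⟨j, hij, hfj⟩ := hfN p hp
      have hij : i < j := lt_of_le_of_ne hij fun h => hfj (h ▸ hfi)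
      obtain ⟨r, hr, hrp⟩ := exists_mem_notMem_of_not_irrelevantIdeal_le hstd (hΛ p hp) (d i - d j)
      have hrf : r * f j ∈ 𝒜 (d i) := by
        simpa only [Nat.sub_add_cancel (hd hij.le)] using SetLike.mul_mem_graded hr (hf j)
      exact ⟨r * f j, ⟨hrf, Ideal.mul_mem_left _ _ (Ideal.subset_span ⟨j, hij, rfl⟩)⟩,
        fun hmem => hfj (hN p hp r hrp _ ((Submodule.add_mem_iff_right (N p) hfi).1 hmem))⟩
    · exact ⟨0, W.zero_mem, by rwa [add_zero]⟩
  exact ⟨w, hw.1, hw.2, hwN⟩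

variable [IsNoetherianRing R] {I : Ideal R} {s : ℕ}

lemma exists_hasLocalGeneratorBound_succ (hstd : IsStandardGraded R₀ R 𝒜) (hd : Antitone d)
    (hf : ∀ j, f j ∈ 𝒜 (d j)) (hfI : ∀ j, f j ∈ I)
    (hloc : ∀ p : PrimeSpectrum R, Order.height p < s →
      LocallyLE p.asIdeal I (Ideal.span (Set.range f))) {i : ℕ}
    (hbound : HasLocalGeneratorBound {p | ¬ irrelevantIdeal R₀ R 𝒜 ≤ p.asIdeal} s I
      (Ideal.span (f '' Set.Iio i)) i) :
    ∃ w ∈ 𝒜 (d i), w ∈ Ideal.span (f '' Set.Ioi i) ∧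
      HasLocalGeneratorBound {p | ¬ irrelevantIdeal R₀ R 𝒜 ≤ p.asIdeal} s I
        (Ideal.span (f '' Set.Iio i) ⊔ Ideal.span {f i + w}) (i + 1) := by
  obtain ⟨Λ, hΛ, hΛbound⟩ := hbound.exists_finset fun p q hqp hp hq => hp (hq.trans hqp)
  have hsplit : Set.range f = f '' Set.Iio i ∪ f '' Set.Ici i := by
    rw [← Set.image_union, Set.Iio_union_Ici, Set.image_univ]
  obtain ⟨w, hw, hwspan, hwΛ⟩ := exists_homogeneous_forall_add_notMem hstd hd hf Λ
    (fun p hp => (hΛ p hp).1) (fun p => fiberKernel p.asIdeal I (Ideal.span (f '' Set.Iio i)))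
    (fun p _ r hr x hx => mem_fiberKernel_of_smul_mem hr hx) (fun p hp => by
      obtain ⟨-, hps, hpb⟩ := hΛ p hp
      have hp_loc := hloc p hps
      rw [hsplit, Ideal.span_union] at hp_loc
      obtain ⟨_, ⟨j, hj, rfl⟩, hjN⟩ :=
        exists_notMem_fiberKernel (IsNoetherian.noetherian I) hp_loc hpb
      exact ⟨j, hj, hjN⟩)
  have hspanI : Ideal.span (f '' Set.Ioi i) ≤ I :=
    Ideal.span_le.2 (Set.image_subset_iff.2 fun j _ => hfI j)
  exact ⟨w, hw, hwspan, hΛbound _ (add_mem (hfI i) (hspanI hwspan)) hwΛ⟩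

lemma exists_generators_hasLocalGeneratorBound (hstd : IsStandardGraded R₀ R 𝒜)
    (hd : Antitone d) (hf : ∀ j, f j ∈ 𝒜 (d j)) (hfI : ∀ j, f j ∈ I)
    (hloc : ∀ p : PrimeSpectrum R, Order.height p < s →
      LocallyLE p.asIdeal I (Ideal.span (Set.range f)))
    (hbound : HasLocalGeneratorBound {p | ¬ irrelevantIdeal R₀ R 𝒜 ≤ p.asIdeal} s I ⊥ 0) (n : ℕ) :
    ∃ v : ℕ → R, (∀ j, v j ∈ 𝒜 (d j)) ∧ (∀ j, n ≤ j → v j = f j) ∧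
      Ideal.span (Set.range v) = Ideal.span (Set.range f) ∧
      ∀ i ≤ n, HasLocalGeneratorBound {p | ¬ irrelevantIdeal R₀ R 𝒜 ≤ p.asIdeal} s I
        (Ideal.span (v '' Set.Iio i)) i := by
  induction n with
  | zero =>
    refine ⟨f, hf, fun _ _ => rfl, rfl, fun i hi => ?_⟩
    obtain rfl := Nat.le_zero.1 hi
    rwa [← Nat.bot_eq_zero, Set.Iio_bot, Set.image_empty, Ideal.span_empty]
  | succ n ih =>
    obtain ⟨v, hv, hvf, hspan, hvbound⟩ := ih
    have hvI : ∀ j, v j ∈ I := fun j =>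
      Ideal.span_le.2 (Set.range_subset_iff.2 hfI) (hspan ▸ Ideal.subset_span ⟨j, rfl⟩)
    obtain ⟨w, hw, hwspan, hwbound⟩ := exists_hasLocalGeneratorBound_succ hstd hd hv hvI
      (by rwa [hspan]) (hvbound n le_rfl)
    have hwspan' : w ∈ Ideal.span (v '' {n}ᶜ) :=
      Ideal.span_mono (Set.image_mono fun j hj => (Set.mem_Ioi.1 hj).ne') hwspan
    have himage : ∀ i ≤ n, Function.update v n (v n + w) '' Set.Iio i = v '' Set.Iio i :=
      fun i hi => Set.image_congr fun j hj =>
        Function.update_of_ne ((Set.mem_Iio.1 hj).trans_le hi).ne _ _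
    refine ⟨Function.update v n (v n + w), fun j => ?_, fun j hj => ?_,
      (span_range_update_add v hwspan').trans hspan, fun i hi => ?_⟩
    · rcases eq_or_ne j n with rfl | hjn
      · rw [Function.update_self]
        exact add_mem (hv j) hw
      · rw [Function.update_of_ne hjn]
        exact hv j
    · rw [Function.update_of_ne (by omega), hvf j (by omega)]
    · rcases Nat.le_add_one_iff.1 hi with hi | rfl
      · exact himage i hi ▸ hvbound i hi
      · rwa [Set.Iio_add_one_eq_Iic, ← Set.Iio_insert, Set.image_insert_eq,
          Function.update_self, himage n le_rfl, Ideal.span_insert, sup_comm]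

end GenericGenerators

section InitialSegments

lemma span_image_Iio_eq_span_range {A M : Type*} [Semiring A] [AddCommMonoid M] [Module A M]
    {v : ℕ → M} {n : ℕ} (hv : ∀ j, n ≤ j → v j = 0) :
    Submodule.span A (v '' Set.Iio n) = Submodule.span A (Set.range v) := by
  refine le_antisymm (Submodule.span_mono (Set.image_subset_range v _))
    (Submodule.span_le.2 (Set.range_subset_iff.2 fun j => ?_))
  rcases lt_or_ge j n with hj | hj
  · exact Submodule.subset_span ⟨j, hj, rfl⟩
  · exact hv j hj ▸ zero_mem _

lemma image_fin_val_setOf_lt {α : Type*} (v : ℕ → α) {i s : ℕ} (his : i ≤ s) :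
    (fun j : Fin s => v j) '' {j : Fin s | (j : ℕ) < i} = v '' Set.Iio i := by
  ext x
  constructor
  · rintro ⟨j, hj, rfl⟩
    exact ⟨j, hj, rfl⟩
  · rintro ⟨j, hj, rfl⟩
    exact ⟨⟨j, (Set.mem_Iio.1 hj).trans_le his⟩, hj, rfl⟩

end InitialSegments

section Residual

variable {A : Type} [CommRing A]

lemma idealHeight_asIdeal (p : PrimeSpectrum A) : idealHeight A p.asIdeal = Order.height p :=
  le_antisymm (iInf₂_le p le_rfl) (le_iInf₂ fun _ hq => Order.height_mono hq)

lemma le_idealHeight_colon_iff {I b : Ideal A} {n : ℕ∞} :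
    n ≤ idealHeight A (b.colon I) ↔
      ∀ p : PrimeSpectrum A, Order.height p < n → LocallyLE p.asIdeal I b := by
  simp only [idealHeight, le_iInf_iff, LocallyLE]
  exact forall_congr' fun p => by rw [← not_lt, imp_not_comm]

lemma idealMu_le_natCast_iff {I : Ideal A} {n : ℕ} :
    idealMu A I ≤ n ↔ ∃ x : Finset A, x.card ≤ n ∧ Ideal.span (x : Set A) = I := by
  refine ⟨fun h => ?_, ?_⟩
  · have hlt : idealMu A I < (n + 1 : ℕ) := h.trans_lt (by exact_mod_cast n.lt_succ_self)
    obtain ⟨_, ⟨x, rfl, hx⟩, hxn⟩ := sInf_lt_iff.1 hlt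
    exact ⟨x, Nat.lt_succ_iff.1 (by exact_mod_cast hxn), hx⟩
  · rintro ⟨x, hxn, hx⟩
    exact (sInf_le ⟨x, rfl, hx⟩ : idealMu A I ≤ x.card).trans (by exact_mod_cast hxn)

lemma locallyGenerated_of_idealMu_map_le (p : Ideal A) [p.IsPrime] {I : Ideal A} (hI : I.FG)
    {n : ℕ} (h : idealMu (Localization.AtPrime p)
      (I.map (algebraMap A (Localization.AtPrime p))) ≤ n) : LocallyGenerated p I ⊥ n := by
  classical
  obtain ⟨x, hxn, hx⟩ := idealMu_le_natCast_iff.1 h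
  have hrep : ∀ z ∈ x, ∃ y ∈ I, ∃ t ∈ p.primeCompl,
      z * algebraMap A (Localization.AtPrime p) t = algebraMap A _ y := fun z hz => by
    obtain ⟨⟨y, t⟩, hzt⟩ := (IsLocalization.mem_map_algebraMap_iff p.primeCompl _).1
      (hx ▸ Ideal.subset_span hz)
    exact ⟨y, y.2, t, t.2, hzt⟩
  choose! y hyI t ht hzt using hrep
  have hle : I.map (algebraMap A (Localization.AtPrime p)) ≤
      (Ideal.span (x.image y : Set A)).map (algebraMap A (Localization.AtPrime p)) := by
    rw [← hx, Ideal.span_le]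
    intro z hz
    have hunit := IsLocalization.map_units (Localization.AtPrime p) ⟨t z, ht z hz⟩
    refine (Ideal.mul_unit_mem_iff_mem _ hunit).1 ?_
    rw [hzt z hz]
    exact Ideal.mem_map_of_mem _ (Ideal.subset_span (Finset.mem_coe.2 (x.mem_image_of_mem y hz)))
  refine ⟨x.image y, Finset.card_image_le.trans hxn, ?_, ?_⟩
  · rw [Finset.coe_image]
    exact Set.image_subset_iff.2 hyI
  · rw [sup_bot_eq]
    refine .of_fg hI fun w hw => locallyLE_span_singleton_iff.2 ?_
    exact (IsLocalization.algebraMap_mem_map_algebraMap_iff p.primeCompl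
      (Localization.AtPrime p) _ _).1 (hle (Ideal.mem_map_of_mem _ hw))

lemma hasLocalGeneratorBound_bot_zero {I : Ideal A} (hI : I.FG) {s : ℕ}
    (hG : ∀ p : PrimeSpectrum A, I ≤ p.asIdeal → idealHeight A p.asIdeal < (s : ℕ∞) →
      idealMu (Localization.AtPrime p.asIdeal)
          (I.map (algebraMap A (Localization.AtPrime p.asIdeal))) ≤
        idealHeight A p.asIdeal + 1)
    (U : Set (PrimeSpectrum A)) : HasLocalGeneratorBound U s I ⊥ 0 := by
  intro p _ h hhs hph
  by_cases hIp : I ≤ p.asIdeal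
  · refine locallyGenerated_of_idealMu_map_le p.asIdeal hI ((hG p hIp ?_).trans ?_)
    · rw [idealHeight_asIdeal]
      exact hph.trans_lt (by exact_mod_cast hhs)
    · rw [idealHeight_asIdeal, Nat.sub_zero, Nat.cast_add_one]
      gcongr
  · obtain ⟨x, hx, hxp⟩ := SetLike.not_le_iff_exists.1 hIp
    refine ⟨{x}, by simp, by simpa using hx, locallyLE_iff.2 ⟨x, hxp, fun y _ => ?_⟩⟩
    rw [Finset.coe_singleton]
    exact Submodule.mem_sup_left (Ideal.mul_mem_right y _ (Ideal.mem_span_singleton_self x))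

lemma isResidualIntersection_span_image_Iio {I : Ideal A} {v : ℕ → A} {i : ℕ}
    (hvI : ∀ j, v j ∈ I) (hloc : ∀ p : PrimeSpectrum A, Order.height p < i →
      LocallyLE p.asIdeal I (Ideal.span (v '' Set.Iio i))) :
    IsResidualIntersection A (Ideal.span (v '' Set.Iio i)) I
      ((Ideal.span (v '' Set.Iio i)).colon I) i := by
  classical
  refine ⟨Ideal.span_le.2 (Set.image_subset_iff.2 fun j _ => hvI j), rfl,
    idealMu_le_natCast_iff.2 ⟨(Finset.range i).image v, ?_, ?_⟩, le_idealHeight_colon_iff.2 hloc⟩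
  · exact Finset.card_image_le.trans (Finset.card_range i).le
  · rw [Finset.coe_image, Finset.coe_range]

variable {R₀ R 𝒜} [IsArtinianRing R₀] [IsLocalRing R₀] [IsNoetherianRing R]

/-- At the unique prime containing `R₊`, of height `h`, the length `n` of the sequence is bounded
through `I` if `h < s`, and through the number of generators of `a` otherwise. -/
lemma exists_antitone_homogeneous_generators_le (h₀ : 𝒜 0 = Submodule.span R₀ {1})
    {I a : Ideal R} (haI : a ≤ I) (ha : a.IsHomogeneous 𝒜) {s : ℕ} (has : idealMu R a ≤ s)
    (hloc : ∀ p : PrimeSpectrum R, Order.height p < s → LocallyLE p.asIdeal I a)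
    (hbound : HasLocalGeneratorBound Set.univ s I ⊥ 0) :
    ∃ n ≤ s, (∀ p : PrimeSpectrum R, irrelevantIdeal R₀ R 𝒜 ≤ p.asIdeal →
        (n : ℕ∞) ≤ Order.height p + 1) ∧
      ∃ (f : ℕ → R) (d : ℕ → ℕ), Antitone d ∧ (∀ j, f j ∈ 𝒜 (d j)) ∧ (∀ j, n ≤ j → f j = 0) ∧
        Ideal.span (Set.range f) = a := by
  cases subsingleton_or_nontrivial R with
  | inl _ =>
    exact ⟨0, s.zero_le, fun _ _ => zero_le, 0, 0, antitone_const, fun _ => zero_mem _,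
      fun _ _ => rfl, Subsingleton.elim _ _⟩
  | inr _ =>
    obtain ⟨m, hm, hirr⟩ := Ideal.exists_le_maximal _ (irrelevantIdeal_ne_top (𝒜 := 𝒜))
    let p : PrimeSpectrum R := ⟨m, hm.isPrime⟩
    have hunique : ∀ q : PrimeSpectrum R, irrelevantIdeal R₀ R 𝒜 ≤ q.asIdeal → q = p :=
      fun q hq => eq_of_irrelevantIdeal_le h₀ hq hirr
    rcases lt_or_ge (Order.height p) s with hps | hsp
    · obtain ⟨h, hh⟩ := ENat.ne_top_iff_exists.1 hps.ne_top
      have hhs : h < s := by exact_mod_cast hh ▸ hps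
      refine ⟨h + 1, hhs, fun q hq => ?_, ?_⟩
      · rw [hunique q hq, ← hh, Nat.cast_add_one]
      · exact exists_antitone_homogeneous_generators h₀ hirr (IsNoetherian.noetherian I) haI ha
          (hloc p hps) (hbound p trivial h hhs hh.ge)
    · obtain ⟨x, hxs, hxa⟩ := idealMu_le_natCast_iff.1 has
      refine ⟨s, le_rfl, fun q hq => hunique q hq ▸ hsp.trans le_self_add, ?_⟩
      exact exists_antitone_homogeneous_generators h₀ hirr (IsNoetherian.noetherian a) le_rfl ha
        (.of_le le_rfl) ⟨x, hxs, hxa ▸ Ideal.subset_span, .of_le (hxa ▸ le_sup_left)⟩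

end Residual

theorem exists_AN_homogeneous_generating_set_general
    (R₀ : Type) [CommRing R₀] [IsArtinianRing R₀] [IsLocalRing R₀]
    [Infinite (IsLocalRing.ResidueField R₀)]
    (R : Type) [CommRing R] [IsNoetherianRing R] [Algebra R₀ R]
    (𝒜 : ℕ → Submodule R₀ R) [GradedAlgebra 𝒜] (hstd : IsStandardGraded R₀ R 𝒜)
    (I : Ideal R) (s : ℕ)
    (hG : ∀ p : PrimeSpectrum R, I ≤ p.asIdeal → idealHeight R p.asIdeal < (s : ℕ∞) →
      idealMu (Localization.AtPrime p.asIdeal)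
          (I.map (algebraMap R (Localization.AtPrime p.asIdeal))) ≤
        idealHeight R p.asIdeal + 1)
    (a J : Ideal R) (hahom : a.IsHomogeneous 𝒜)
    (hres : IsResidualIntersection R a I J s) :
    ∃ aa : Fin s → R,
      (∀ i, ∃ d : ℕ, aa i ∈ 𝒜 d) ∧
      Ideal.span (Set.range aa) = a ∧
      ∀ i : ℕ, i ≤ s →
        IsResidualIntersection R (Ideal.span (aa '' {j : Fin s | (j : ℕ) < i})) I
          ((Ideal.span (aa '' {j : Fin s | (j : ℕ) < i})).colon I) i := by
  obtain ⟨haI, rfl, has, hht⟩ := hres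
  have hloc := le_idealHeight_colon_iff.1 hht
  have hbound := hasLocalGeneratorBound_bot_zero (IsNoetherian.noetherian I) hG
  obtain ⟨n, hns, hn, f, d, hd, hf, hf_zero, rfl⟩ :=
    exists_antitone_homogeneous_generators_le hstd.1 haI hahom has hloc (hbound _)
  obtain ⟨v, hv, hvf, hspan, hvbound⟩ := exists_generators_hasLocalGeneratorBound hstd hd hf
    (fun j => haI (Ideal.subset_span ⟨j, rfl⟩)) hloc (hbound _) n
  have hspan_Iio : ∀ i, n ≤ i → Ideal.span (v '' Set.Iio i) = Ideal.span (Set.range f) :=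
    fun i hni => (span_image_Iio_eq_span_range fun j hj =>
      (hvf j (hni.trans hj)).trans (hf_zero j (hni.trans hj))).trans hspan
  refine ⟨fun j => v j, fun j => ⟨d j, hv j⟩, ?_, fun i his => ?_⟩
  · rw [← hspan_Iio s hns, ← image_fin_val_setOf_lt v le_rfl]
    simp only [Fin.is_lt, Set.ofPred_true, Set.image_univ]
  · rw [image_fin_val_setOf_lt v his]
    refine isResidualIntersection_span_image_Iio
      (fun j => haI (hspan ▸ Ideal.subset_span ⟨j, rfl⟩)) fun p hpi => ?_
    rcases le_or_gt n i with hni | hin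
    · rw [hspan_Iio i hni]
      exact hloc p (hpi.trans_le (by exact_mod_cast his))
    · refine (hvbound i hin.le).locallyLE his (fun hirr => ?_) hpi
      have hni : n ≤ i := by exact_mod_cast (hn p hirr).trans (Order.add_one_le_of_lt hpi)
      exact hin.not_ge hni

/-- **(Lemma 4.4 / `Lulrich`)** Let `R` be a standard positively graded Noetherian ring with
`(R₀, 𝔪₀)` Artinian local with infinite residue field, and let `I` be a homogeneous ideal
of height `g` satisfying `G_s`.  If `J = 𝔞 : I` is an `s`-residual intersection of `I`
with `𝔞` homogeneous, then `𝔞` has an A-N homogeneous generating set: a homogeneous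
generating set `a_1, …, a_s` such that `(a_1, …, a_i) : I` is an `i`-residual intersection
of `I` for every `g ≤ i ≤ s`. -/
theorem exists_AN_homogeneous_generating_set
    (R₀ : Type) [CommRing R₀] [IsArtinianRing R₀] [IsLocalRing R₀]
    [Infinite (IsLocalRing.ResidueField R₀)]
    (R : Type) [CommRing R] [IsNoetherianRing R] [Algebra R₀ R]
    (𝒜 : ℕ → Submodule R₀ R) [GradedAlgebra 𝒜] (hstd : IsStandardGraded R₀ R 𝒜)
    (g : ℕ) (I : Ideal R) (hIhom : I.IsHomogeneous 𝒜)
    (hht : idealHeight R I = (g : ℕ∞))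
    (s : ℕ) (hs : g ≤ s)
    -- `I` satisfies `G_s`
    (hGs : ∀ p : PrimeSpectrum R, I ≤ p.asIdeal → idealHeight R p.asIdeal < (s : ℕ∞) →
      idealMu (Localization.AtPrime p.asIdeal)
          (I.map (algebraMap R (Localization.AtPrime p.asIdeal))) ≤
        idealHeight R p.asIdeal)
    (a J : Ideal R) (hahom : a.IsHomogeneous 𝒜)
    (hres : IsResidualIntersection R a I J s) :
    ∃ aa : Fin s → R,
      (∀ i, ∃ d : ℕ, aa i ∈ 𝒜 d) ∧
      Ideal.span (Set.range aa) = a ∧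
      ∀ i : ℕ, g ≤ i → i ≤ s →
        IsResidualIntersection R (Ideal.span (aa '' {j : Fin s | (j : ℕ) < i})) I
          ((Ideal.span (aa '' {j : Fin s | (j : ℕ) < i})).colon I) i := by
  obtain ⟨aa, hhom, hspan, hAN⟩ := exists_AN_homogeneous_generating_set_general R₀ R 𝒜 hstd I s
    (fun p hIp hps => (hGs p hIp hps).trans le_self_add) a J hahom hres
  exact ⟨aa, hhom, hspan, fun i _ his => hAN i his⟩

end
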